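/- With the notation of the iterated integrals Ω at φ = π/4, one has Ω_{3,1,2,3} = −(iπ³/4)·log 2 + (13/8)·iπ·ζ(3). -/

import Mathlib

noncomputable section

/-- `p₁ = e^{iπ/4}` -/
def p₁ : ℂ := Complex.exp (Complex.I * ((Real.pi : ℂ) / 4))
/-- `p₂ = -e^{-iπ/4}` -/
def p₂ : ℂ := -Complex.exp (-(Complex.I * ((Real.pi : ℂ) / 4)))
/-- `p₃ = -p₁` -/
def p₃ : ℂ := -p₁
/-- `p₄ = -p₂` -/
def p₄ : ℂ := -p₂

def F₁ (z : ℂ) : ℂ := 1 / (z - p₁) - 1 / (z - p₂) + 1 / (z - p₃) - 1 / (z - p₄)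

def F₂ (z : ℂ) : ℂ := 1 / (z - p₁) - 1 / (z - p₂) - 1 / (z - p₃) + 1 / (z - p₄)

def F₃ (z : ℂ) : ℂ := 1 / (z - p₁) + 1 / (z - p₂) - 1 / (z - p₃) - 1 / (z - p₄)

/-- Iterated integral along `[0, z]`:
`Omega [F_{i₁}, …, F_{iₙ}] z = Ω_{i₁,…,iₙ}(z)`, defined recursively by
`Ω_{i₁,…,i_k}(z) = ∫₀ᶻ Ω_{i₁,…,i_{k-1}}(t) · F_{i_k}(t) dt`, with `Ω_∅ ≡ 1`. -/
def Omega (fs : List (ℂ → ℂ)) : ℝ → ℂ :=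
  fs.foldl (fun g f => fun z => ∫ t in (0:ℝ)..z, g t * f (t : ℂ)) (fun _ => 1)

/-!
On the real line the partial fractions collapse to real weights, `F₁ = 2i w₁`, `F₂ = -2 w₂` and
`F₃ = 2i w₃`, and the substitution `sin θ = sinh φ = √2 z / √(1 + z⁴)` gives `w₃ dz = dθ`,
`w₂ dz = dφ` and `w₁ = tan θ · w₂`. Hence the two inner integrations of `Ω_{3,1,2,3}` produce
`∫ θ tan θ dφ`. Expanding `θ tan θ` in powers of `sin² θ = sinh² φ` turns the whole integral into
`iπ ∑ X (k + 1) / (k + 1)`, where the normalised moments `X k` satisfy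
`X k + X (k + 1) = 1 / (k + 1)²` by the reduction formulas for powers of `sin` and `sinh`.

The sequence `Z k = ∫₀¹ xᵏ / (1 + x) dx` satisfies `Z k + Z (k + 1) = 1 / (k + 1)`, so summation by
parts replaces `∑ X (k + 1) / (k + 1)` by `∑ Z k / (k + 1)² - Z 0 · X 0`, with `Z 0 = log 2` and
`X 0 = π² / 12`. The remaining sum reduces to `∫₀¹ -log (1 - x) log (1 + x) / x dx = 5/8 · ζ(3)`,
which follows by polarisation from the integrals of `log² (1 - x²) / x` and
`log² ((1 - x) / (1 + x)) / x`.
-/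

open MeasureTheory Filter Topology Set

section Primitive

variable {E : Type*} [NormedAddCommGroup E] [NormedSpace ℝ E]

/-- The primitive vanishing at `0`, as a linear operator on continuous functions. Bundling the
continuity makes iterated primitives well defined without integrability side conditions. -/
def primitiveFromZero : C(ℝ, E) →ₗ[ℝ] C(ℝ, E) where
  toFun f := ⟨fun z => ∫ t in (0 : ℝ)..z, f t,
    intervalIntegral.continuous_primitive (fun a b => f.continuous.intervalIntegrable a b) 0⟩
  map_add' f g := by
    ext z
    exact intervalIntegral.integral_add (f.continuous.intervalIntegrable 0 z)
      (g.continuous.intervalIntegrable 0 z)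
  map_smul' c f := by
    ext z
    exact intervalIntegral.integral_smul c f

lemma primitiveFromZero_apply (f : C(ℝ, E)) (z : ℝ) :
    primitiveFromZero f z = ∫ t in (0 : ℝ)..z, f t :=
  rfl

lemma primitiveFromZero_eq_of_hasDerivAt [CompleteSpace E] {f F : C(ℝ, E)}
    (hF : ∀ z, HasDerivAt F (f z) z) (hF0 : F 0 = 0) : primitiveFromZero f = F := by
  ext z
  rw [primitiveFromZero_apply, intervalIntegral.integral_eq_sub_of_hasDerivAt (fun t _ => hF t)
    (f.continuous.intervalIntegrable 0 z), hF0, sub_zero]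

lemma tendsto_primitiveFromZero_zero_of_dominated {f : ℕ → C(ℝ, E)} (B : C(ℝ, ℝ)) {b : ℝ}
    (hb : 0 ≤ b) (hB : ∀ k, ∀ t ∈ Icc 0 b, ‖f k t‖ ≤ B t)
    (hf : ∀ t ∈ Ico 0 b, Tendsto (fun k => f k t) atTop (𝓝 0)) :
    Tendsto (fun k => primitiveFromZero (f k) b) atTop (𝓝 0) := by
  have h : Tendsto (fun k => ∫ t in (0 : ℝ)..b, f k t) atTop (𝓝 (∫ _ in (0 : ℝ)..b, (0 : E))) := by
    refine intervalIntegral.tendsto_integral_filter_of_dominated_convergence B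
      (.of_forall fun k => (f k).continuous.aestronglyMeasurable)
      (.of_forall fun k => .of_forall fun t ht => ?_) (B.continuous.intervalIntegrable 0 b) ?_
    · rw [uIoc_of_le hb] at ht
      exact hB k t (Ioc_subset_Icc_self ht)
    · filter_upwards [Measure.ae_ne volume b] with t htb ht
      rw [uIoc_of_le hb] at ht
      exact hf t ⟨ht.1.le, lt_of_le_of_ne ht.2 htb⟩
  simpa only [intervalIntegral.integral_zero, primitiveFromZero_apply] using h

variable {f g : C(ℝ, ℝ)} {z b : ℝ}

lemma primitiveFromZero_mono (hz : 0 ≤ z) (h : ∀ t ∈ Icc 0 z, f t ≤ g t) :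
    primitiveFromZero f z ≤ primitiveFromZero g z :=
  intervalIntegral.integral_mono_on hz (f.continuous.intervalIntegrable 0 z)
    (g.continuous.intervalIntegrable 0 z) h

lemma primitiveFromZero_nonneg (hz : 0 ≤ z) (h : ∀ t ∈ Icc 0 z, 0 ≤ f t) :
    0 ≤ primitiveFromZero f z :=
  intervalIntegral.integral_nonneg hz h

lemma primitiveFromZero_le_of_le (hz : 0 ≤ z) (hzb : z ≤ b) (h : ∀ t ∈ Icc 0 b, 0 ≤ f t) :
    primitiveFromZero f z ≤ primitiveFromZero f b := by
  refine intervalIntegral.integral_mono_interval le_rfl hz hzb ?_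
    (f.continuous.intervalIntegrable 0 b)
  filter_upwards [ae_restrict_mem measurableSet_Ioc] with t ht
  exact h t (Ioc_subset_Icc_self ht)

end Primitive

lemma Omega_concat_eq_mul_primitiveFromZero {fs : List (ℂ → ℂ)} {F : ℂ → ℂ} {g w : C(ℝ, ℝ)}
    {c d : ℂ} (hfs : ∀ t, Omega fs t = c * g t) (hF : ∀ t : ℝ, F t = d * w t) (z : ℝ) :
    Omega (fs ++ [F]) z = c * d * (primitiveFromZero (g * w) z : ℝ) := by
  have hconcat : Omega (fs ++ [F]) z = ∫ t in (0 : ℝ)..z, Omega fs t * F t := by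
    simp only [Omega, List.foldl_append, List.foldl_cons, List.foldl_nil]
  rw [hconcat, primitiveFromZero_apply, ← intervalIntegral.integral_ofReal,
    ← intervalIntegral.integral_const_mul]
  refine intervalIntegral.integral_congr fun t _ => ?_
  simp only [hfs, hF, ContinuousMap.mul_apply, Complex.ofReal_mul]
  ring

section PartialFractions

lemma p₁_eq : p₁ = (√2 / 2 : ℝ) * (1 + Complex.I) := by
  rw [p₁, show Complex.I * ((Real.pi : ℂ) / 4) = ((Real.pi / 4 : ℝ) : ℂ) * Complex.I by
      push_cast; ring,
    Complex.exp_mul_I, ← Complex.ofReal_cos, ← Complex.ofReal_sin, Real.cos_pi_div_four,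
    Real.sin_pi_div_four]
  ring

lemma p₂_eq : p₂ = (√2 / 2 : ℝ) * (-1 + Complex.I) := by
  rw [p₂, show -(Complex.I * ((Real.pi : ℂ) / 4)) = ((-(Real.pi / 4) : ℝ) : ℂ) * Complex.I by
      push_cast; ring,
    Complex.exp_mul_I, ← Complex.ofReal_cos, ← Complex.ofReal_sin, Real.cos_neg, Real.sin_neg,
    Real.cos_pi_div_four, Real.sin_pi_div_four]
  push_cast
  ring

lemma ofReal_sqrt_two_sq : ((√2 : ℝ) : ℂ) ^ 2 = 2 := by
  rw [← Complex.ofReal_pow, Real.sq_sqrt zero_le_two, Complex.ofReal_ofNat]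

lemma p₁_sq : p₁ ^ 2 = Complex.I := by
  rw [p₁_eq]
  push_cast
  linear_combination (1 + Complex.I) ^ 2 / 4 * ofReal_sqrt_two_sq + 1 / 2 * Complex.I_sq

lemma p₂_sq : p₂ ^ 2 = -Complex.I := by
  rw [p₂_eq]
  push_cast
  linear_combination (-1 + Complex.I) ^ 2 / 4 * ofReal_sqrt_two_sq + 1 / 2 * Complex.I_sq

lemma p₁_sub_p₂ : p₁ - p₂ = √2 := by
  rw [p₁_eq, p₂_eq]
  push_cast
  ring

lemma p₁_add_p₂ : p₁ + p₂ = √2 * Complex.I := by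
  rw [p₁_eq, p₂_eq]
  push_cast
  ring

variable {K : Type*} [Field K] {z a : K}

lemma one_div_sub_add_one_div_add (h : z ^ 2 - a ^ 2 ≠ 0) :
    1 / (z - a) + 1 / (z - -a) = 2 * z / (z ^ 2 - a ^ 2) := by
  have hsub : z - a ≠ 0 := fun h0 => h (by linear_combination (z + a) * h0)
  have hadd : z - -a ≠ 0 := fun h0 => h (by linear_combination (z - a) * h0)
  rw [div_add_div _ _ hsub hadd, div_eq_div_iff (mul_ne_zero hsub hadd) h]
  ring

lemma one_div_sub_sub_one_div_add (h : z ^ 2 - a ^ 2 ≠ 0) :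
    1 / (z - a) - 1 / (z - -a) = 2 * a / (z ^ 2 - a ^ 2) := by
  have hsub : z - a ≠ 0 := fun h0 => h (by linear_combination (z + a) * h0)
  have hadd : z - -a ≠ 0 := fun h0 => h (by linear_combination (z - a) * h0)
  rw [div_sub_div _ _ hsub hadd, div_eq_div_iff (mul_ne_zero hsub hadd) h]
  ring

variable {z : ℂ}

lemma sq_sub_p₁_sq_mul_sq_sub_p₂_sq (z : ℂ) :
    (z ^ 2 - p₁ ^ 2) * (z ^ 2 - p₂ ^ 2) = 1 + z ^ 4 := by
  rw [p₁_sq, p₂_sq]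
  linear_combination -Complex.I_sq

lemma sq_sub_p₁_sq_ne_zero (hz : 1 + z ^ 4 ≠ 0) : z ^ 2 - p₁ ^ 2 ≠ 0 :=
  left_ne_zero_of_mul (sq_sub_p₁_sq_mul_sq_sub_p₂_sq z ▸ hz)

lemma sq_sub_p₂_sq_ne_zero (hz : 1 + z ^ 4 ≠ 0) : z ^ 2 - p₂ ^ 2 ≠ 0 :=
  right_ne_zero_of_mul (sq_sub_p₁_sq_mul_sq_sub_p₂_sq z ▸ hz)

lemma F₁_eq (hz : 1 + z ^ 4 ≠ 0) : F₁ z = 2 * Complex.I * (2 * z / (1 + z ^ 4)) := by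
  have h₁ := sq_sub_p₁_sq_ne_zero hz
  have h₂ := sq_sub_p₂_sq_ne_zero hz
  calc F₁ z = (1 / (z - p₁) + 1 / (z - -p₁)) - (1 / (z - p₂) + 1 / (z - -p₂)) := by
        rw [F₁, p₃, p₄]; ring
    _ = 2 * z / (z ^ 2 - p₁ ^ 2) - 2 * z / (z ^ 2 - p₂ ^ 2) := by
        rw [one_div_sub_add_one_div_add h₁, one_div_sub_add_one_div_add h₂]
    _ = (2 * z * (z ^ 2 - p₂ ^ 2) - (z ^ 2 - p₁ ^ 2) * (2 * z)) / (1 + z ^ 4) := by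
        rw [div_sub_div _ _ h₁ h₂, sq_sub_p₁_sq_mul_sq_sub_p₂_sq]
    _ = 2 * Complex.I * (2 * z / (1 + z ^ 4)) := by
        rw [p₁_sq, p₂_sq]; ring

lemma F₂_eq (hz : 1 + z ^ 4 ≠ 0) : F₂ z = -2 * (√2 * (1 - z ^ 2) / (1 + z ^ 4)) := by
  have h₁ := sq_sub_p₁_sq_ne_zero hz
  have h₂ := sq_sub_p₂_sq_ne_zero hz
  calc F₂ z = (1 / (z - p₁) - 1 / (z - -p₁)) - (1 / (z - p₂) - 1 / (z - -p₂)) := by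
        rw [F₂, p₃, p₄]; ring
    _ = 2 * p₁ / (z ^ 2 - p₁ ^ 2) - 2 * p₂ / (z ^ 2 - p₂ ^ 2) := by
        rw [one_div_sub_sub_one_div_add h₁, one_div_sub_sub_one_div_add h₂]
    _ = (2 * p₁ * (z ^ 2 - p₂ ^ 2) - (z ^ 2 - p₁ ^ 2) * (2 * p₂)) / (1 + z ^ 4) := by
        rw [div_sub_div _ _ h₁ h₂, sq_sub_p₁_sq_mul_sq_sub_p₂_sq]
    _ = (2 * z ^ 2 * (p₁ - p₂) + 2 * Complex.I * (p₁ + p₂)) / (1 + z ^ 4) := by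
        rw [p₁_sq, p₂_sq]; ring
    _ = (2 * z ^ 2 * √2 + 2 * √2 * Complex.I ^ 2) / (1 + z ^ 4) := by
        rw [p₁_sub_p₂, p₁_add_p₂]; ring
    _ = -2 * (√2 * (1 - z ^ 2) / (1 + z ^ 4)) := by
        rw [Complex.I_sq]; ring

lemma F₃_eq (hz : 1 + z ^ 4 ≠ 0) :
    F₃ z = 2 * Complex.I * (√2 * (1 + z ^ 2) / (1 + z ^ 4)) := by
  have h₁ := sq_sub_p₁_sq_ne_zero hz
  have h₂ := sq_sub_p₂_sq_ne_zero hz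
  calc F₃ z = (1 / (z - p₁) - 1 / (z - -p₁)) + (1 / (z - p₂) - 1 / (z - -p₂)) := by
        rw [F₃, p₃, p₄]; ring
    _ = 2 * p₁ / (z ^ 2 - p₁ ^ 2) + 2 * p₂ / (z ^ 2 - p₂ ^ 2) := by
        rw [one_div_sub_sub_one_div_add h₁, one_div_sub_sub_one_div_add h₂]
    _ = (2 * p₁ * (z ^ 2 - p₂ ^ 2) + (z ^ 2 - p₁ ^ 2) * (2 * p₂)) / (1 + z ^ 4) := by
        rw [div_add_div _ _ h₁ h₂, sq_sub_p₁_sq_mul_sq_sub_p₂_sq]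
    _ = (2 * z ^ 2 * (p₁ + p₂) + 2 * Complex.I * (p₁ - p₂)) / (1 + z ^ 4) := by
        rw [p₁_sq, p₂_sq]; ring
    _ = 2 * Complex.I * (√2 * (1 + z ^ 2) / (1 + z ^ 4)) := by
        rw [p₁_sub_p₂, p₁_add_p₂]; ring

end PartialFractions

section Weights

/-- The real weight of `F₁ = 2i w₁`; its primitive is `arctan z²`. -/
def w₁ : C(ℝ, ℝ) :=
  ⟨fun z => 2 * z / (1 + z ^ 4), by fun_prop (disch := intro; positivity)⟩

/-- The real weight of `F₂ = -2 w₂`. Its primitive is the `φ` with `sinh φ = √2 z / √(1 + z⁴)`. -/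
def w₂ : C(ℝ, ℝ) :=
  ⟨fun z => √2 * (1 - z ^ 2) / (1 + z ^ 4), by fun_prop (disch := intro; positivity)⟩

/-- The real weight of `F₃ = 2i w₃`. Its primitive on `[0, 1]` is the `θ` with
`sin θ = √2 z / √(1 + z⁴)`. -/
def w₃ : C(ℝ, ℝ) :=
  ⟨fun z => √2 * (1 + z ^ 2) / (1 + z ^ 4), by fun_prop (disch := intro; positivity)⟩

/-- `sin² θ = sinh² φ` as a function of `z`, where `dθ = w₃ dz` and `dφ = w₂ dz`. -/
def sinSq : C(ℝ, ℝ) :=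
  ⟨fun z => 2 * z ^ 2 / (1 + z ^ 4), by fun_prop (disch := intro; positivity)⟩

/-- `sin θ cos θ` as a function of `z`, where `dθ = w₃ dz`. -/
def sinMulCos : C(ℝ, ℝ) :=
  ⟨fun z => √2 * z * (1 - z ^ 2) / (1 + z ^ 4), by fun_prop (disch := intro; positivity)⟩

/-- `sinh φ cosh φ` as a function of `z`, where `dφ = w₂ dz`. -/
def sinhMulCosh : C(ℝ, ℝ) :=
  ⟨fun z => √2 * z * (1 + z ^ 2) / (1 + z ^ 4), by fun_prop (disch := intro; positivity)⟩

variable (z : ℝ)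

lemma w₁_apply : w₁ z = 2 * z / (1 + z ^ 4) := rfl
lemma w₂_apply : w₂ z = √2 * (1 - z ^ 2) / (1 + z ^ 4) := rfl
lemma w₃_apply : w₃ z = √2 * (1 + z ^ 2) / (1 + z ^ 4) := rfl
lemma sinSq_apply : sinSq z = 2 * z ^ 2 / (1 + z ^ 4) := rfl
lemma sinMulCos_apply : sinMulCos z = √2 * z * (1 - z ^ 2) / (1 + z ^ 4) := rfl
lemma sinhMulCosh_apply : sinhMulCosh z = √2 * z * (1 + z ^ 2) / (1 + z ^ 4) := rfl

lemma one_add_ofReal_pow_four_ne_zero : 1 + (z : ℂ) ^ 4 ≠ 0 := by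
  exact_mod_cast (by positivity : 1 + z ^ 4 ≠ 0)

lemma F₁_ofReal : F₁ z = 2 * Complex.I * w₁ z := by
  rw [F₁_eq (one_add_ofReal_pow_four_ne_zero z), w₁_apply]
  push_cast
  rfl

lemma F₂_ofReal : F₂ z = -2 * w₂ z := by
  rw [F₂_eq (one_add_ofReal_pow_four_ne_zero z), w₂_apply]
  push_cast
  rfl

lemma F₃_ofReal : F₃ z = 2 * Complex.I * w₃ z := by
  rw [F₃_eq (one_add_ofReal_pow_four_ne_zero z), w₃_apply]
  push_cast
  rfl

variable {z}

lemma w₁_nonneg (hz : 0 ≤ z) : 0 ≤ w₁ z := by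
  rw [w₁_apply]
  positivity

lemma w₂_nonneg (hz : z ∈ Icc (0 : ℝ) 1) : 0 ≤ w₂ z := by
  have : 0 ≤ 1 - z ^ 2 := sub_nonneg.2 (pow_le_one₀ hz.1 hz.2)
  rw [w₂_apply]
  positivity

variable (z)

lemma w₃_nonneg : 0 ≤ w₃ z := by
  rw [w₃_apply]
  positivity

lemma sinSq_nonneg : 0 ≤ sinSq z := by
  rw [sinSq_apply]
  positivity

variable {z}

lemma sinSq_lt_one (hz : z ∈ Ico (0 : ℝ) 1) : sinSq z < 1 := by
  have : 0 < 1 - z ^ 2 := sub_pos.2 (pow_lt_one₀ hz.1 hz.2 two_ne_zero)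
  rw [sinSq_apply, div_lt_one (by positivity)]
  nlinarith [pow_pos this 2]

lemma monotoneOn_sinSq : MonotoneOn sinSq (Icc 0 1) := by
  intro s hs t ht hst
  have hsq : s ^ 2 ≤ t ^ 2 := pow_le_pow_left₀ hs.1 hst 2
  have hprod : s ^ 2 * t ^ 2 ≤ 1 :=
    mul_le_one₀ (pow_le_one₀ hs.1 hs.2) (sq_nonneg t) (pow_le_one₀ ht.1 ht.2)
  rw [sinSq_apply, sinSq_apply, div_le_div_iff₀ (by positivity) (by positivity)]
  nlinarith [mul_nonneg (sub_nonneg.2 hsq) (sub_nonneg.2 hprod)]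

variable (z)

lemma sinMulCos_sq : sinMulCos z ^ 2 = sinSq z * (1 - 1 * sinSq z) := by
  rw [sinMulCos_apply, sinSq_apply, div_pow, mul_pow, mul_pow, Real.sq_sqrt zero_le_two]
  field_simp
  ring

lemma sinhMulCosh_sq : sinhMulCosh z ^ 2 = sinSq z * (1 - -1 * sinSq z) := by
  rw [sinhMulCosh_apply, sinSq_apply, div_pow, mul_pow, mul_pow, Real.sq_sqrt zero_le_two]
  field_simp
  ring

lemma sinMulCos_mul_w₁ : sinMulCos z * w₁ z = sinSq z * w₂ z := by
  rw [sinMulCos_apply, w₁_apply, sinSq_apply, w₂_apply]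
  ring

lemma sinMulCos_mul_w₃ : sinMulCos z * w₃ z = sinhMulCosh z * w₂ z := by
  rw [sinMulCos_apply, w₃_apply, sinhMulCosh_apply, w₂_apply]
  ring

lemma hasDerivAt_one_add_pow_four : HasDerivAt (fun z : ℝ => 1 + z ^ 4) (4 * z ^ 3) z := by
  simpa using (hasDerivAt_pow 4 z).const_add 1

lemma hasDerivAt_sinSq : HasDerivAt sinSq (2 * sinhMulCosh z * w₂ z) z := by
  have hnum : HasDerivAt (fun z : ℝ => 2 * z ^ 2) (4 * z) z := by
    refine ((hasDerivAt_pow 2 z).const_mul 2).congr_deriv ?_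
    simp only [Nat.cast_ofNat]
    ring
  refine (hnum.div (hasDerivAt_one_add_pow_four z) (by positivity)).congr_deriv ?_
  rw [sinhMulCosh_apply, w₂_apply]
  field_simp
  simp only [Real.sq_sqrt zero_le_two]
  ring

lemma hasDerivAt_sinMulCos :
    HasDerivAt sinMulCos ((1 - 2 * 1 * sinSq z) * w₃ z) z := by
  have hnum : HasDerivAt (fun z : ℝ => √2 * z * (1 - z ^ 2)) (√2 * (1 - 3 * z ^ 2)) z := by
    refine (((hasDerivAt_id z).const_mul √2).mul
      ((hasDerivAt_pow 2 z).const_sub 1)).congr_deriv ?_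
    simp only [id, Nat.cast_ofNat]
    ring
  refine (hnum.div (hasDerivAt_one_add_pow_four z) (by positivity)).congr_deriv ?_
  rw [sinSq_apply, w₃_apply]
  field_simp
  ring

lemma hasDerivAt_sinhMulCosh :
    HasDerivAt sinhMulCosh ((1 - 2 * -1 * sinSq z) * w₂ z) z := by
  have hnum : HasDerivAt (fun z : ℝ => √2 * z * (1 + z ^ 2)) (√2 * (1 + 3 * z ^ 2)) z := by
    refine (((hasDerivAt_id z).const_mul √2).mul
      ((hasDerivAt_pow 2 z).const_add 1)).congr_deriv ?_
    simp only [id, Nat.cast_ofNat]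
    ring
  refine (hnum.div (hasDerivAt_one_add_pow_four z) (by positivity)).congr_deriv ?_
  rw [sinSq_apply, w₂_apply]
  field_simp
  ring

/- With `ε = 1`, `q = sin²`, `s = sin cos` (resp. `ε = -1`, `q = sinh²`, `s = sinh cosh`) this is
the reduction formula for the integrals of even powers. -/
lemma hasDerivAt_pow_mul_of_sq_eq {q s : ℝ → ℝ} {w ε z : ℝ} (hq : HasDerivAt q (2 * s z * w) z)
    (hs : HasDerivAt s ((1 - 2 * ε * q z) * w) z) (hsq : s z ^ 2 = q z * (1 - ε * q z)) (k : ℕ) :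
    HasDerivAt (fun x => q x ^ k * s x)
      (((2 * k + 1) * q z ^ k - ε * (2 * k + 2) * q z ^ (k + 1)) * w) z := by
  refine ((hq.fun_pow k).mul hs).congr_deriv ?_
  rcases k with _ | k
  · simp only [Nat.cast_zero, pow_zero, zero_mul]
    ring
  · simp only [Nat.add_sub_cancel, Nat.cast_add, Nat.cast_one]
    linear_combination 2 * (k + 1) * q z ^ k * w * hsq

end Weights

section Wallis

/-- The reciprocal `4ᵏ / C(2k, k)` of the Wallis ratio `(2 / π) ∫₀^{π/2} sin²ᵏ θ dθ`. -/
def wallisCoeff (k : ℕ) : ℝ := 4 ^ k / k.centralBinom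

lemma wallisCoeff_zero : wallisCoeff 0 = 1 := by
  simp only [wallisCoeff, pow_zero, Nat.centralBinom_zero, Nat.cast_one, div_one]

variable (k : ℕ)

lemma wallisCoeff_pos : 0 < wallisCoeff k :=
  div_pos (by positivity) (Nat.cast_pos.2 k.centralBinom_pos)

lemma wallisCoeff_succ :
    wallisCoeff (k + 1) * (2 * k + 1) = wallisCoeff k * (2 * k + 2) := by
  have hk : (k.centralBinom : ℝ) ≠ 0 := Nat.cast_ne_zero.2 k.centralBinom_ne_zero
  have hk' : ((k + 1).centralBinom : ℝ) ≠ 0 := Nat.cast_ne_zero.2 (k + 1).centralBinom_ne_zero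
  have h : ((k : ℝ) + 1) * (k + 1).centralBinom = 2 * (2 * k + 1) * k.centralBinom := by
    exact_mod_cast k.succ_mul_centralBinom_succ
  rw [wallisCoeff, wallisCoeff, div_mul_eq_mul_div, div_mul_eq_mul_div, div_eq_div_iff hk' hk]
  linear_combination -2 * 4 ^ k * h

lemma wallisCoeff_le : wallisCoeff k ≤ k + 1 := by
  induction k with
  | zero => simp only [wallisCoeff_zero, Nat.cast_zero, zero_add, le_refl]
  | succ k ih =>
    refine le_of_mul_le_mul_right ?_ (by positivity : (0 : ℝ) < 2 * k + 1)
    calc wallisCoeff (k + 1) * (2 * k + 1)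
        = wallisCoeff k * (2 * k + 2) := wallisCoeff_succ k
      _ ≤ (k + 1) * (2 * k + 2) := by gcongr
      _ ≤ ((k + 1 : ℕ) + 1) * (2 * k + 1) := by
          push_cast
          nlinarith [(Nat.cast_nonneg k : (0 : ℝ) ≤ k)]

end Wallis

section Reduction

variable (k : ℕ)

/-- `∫₀^θ sin²ᵏ` as a function of `z`, where `dθ = w₃ dz`. -/
def sinPowIntegral : C(ℝ, ℝ) := primitiveFromZero (sinSq ^ k * w₃)

/-- `∫₀^φ sinh²ᵏ` as a function of `z`, where `dφ = w₂ dz`. -/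
def sinhPowIntegral : C(ℝ, ℝ) := primitiveFromZero (sinSq ^ k * w₂)

lemma sinPowIntegral_recurrence :
    (2 * k + 1 : ℝ) • sinPowIntegral k - (2 * k + 2 : ℝ) • sinPowIntegral (k + 1)
      = sinSq ^ k * sinMulCos := by
  rw [sinPowIntegral, sinPowIntegral, ← map_smul, ← map_smul, ← map_sub]
  refine primitiveFromZero_eq_of_hasDerivAt (fun z => ?_) ?_
  · refine (hasDerivAt_pow_mul_of_sq_eq (ε := 1) ?_ (hasDerivAt_sinMulCos z)
      (sinMulCos_sq z) k).congr_deriv ?_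
    · exact (hasDerivAt_sinSq z).congr_deriv (by linear_combination -2 * sinMulCos_mul_w₃ z)
    · simp only [ContinuousMap.sub_apply, ContinuousMap.smul_apply, ContinuousMap.mul_apply,
        ContinuousMap.pow_apply, smul_eq_mul]
      ring
  · simp only [ContinuousMap.mul_apply, sinMulCos_apply, mul_zero, zero_mul, zero_div]

lemma sinhPowIntegral_recurrence :
    (2 * k + 1 : ℝ) • sinhPowIntegral k + (2 * k + 2 : ℝ) • sinhPowIntegral (k + 1)
      = sinSq ^ k * sinhMulCosh := by
  rw [sinhPowIntegral, sinhPowIntegral, ← map_smul, ← map_smul, ← map_add]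
  refine primitiveFromZero_eq_of_hasDerivAt (fun z => ?_) ?_
  · refine (hasDerivAt_pow_mul_of_sq_eq (ε := -1) (hasDerivAt_sinSq z) (hasDerivAt_sinhMulCosh z)
      (sinhMulCosh_sq z) k).congr_deriv ?_
    simp only [ContinuousMap.add_apply, ContinuousMap.smul_apply, ContinuousMap.mul_apply,
      ContinuousMap.pow_apply, smul_eq_mul]
    ring
  · simp only [ContinuousMap.mul_apply, sinhMulCosh_apply, mul_zero, zero_mul, zero_div]

lemma smul_primitiveFromZero_sinSq_pow_mul_sinhMulCosh :
    (2 * k + 2 : ℝ) • primitiveFromZero (sinSq ^ k * sinhMulCosh * w₂) = sinSq ^ (k + 1) := by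
  rw [← map_smul]
  refine primitiveFromZero_eq_of_hasDerivAt (fun z => ?_) ?_
  · refine ((hasDerivAt_sinSq z).fun_pow (k + 1)).congr_deriv ?_
    simp only [ContinuousMap.smul_apply, ContinuousMap.mul_apply, ContinuousMap.pow_apply,
      smul_eq_mul, Nat.add_sub_cancel, Nat.cast_add, Nat.cast_one]
    ring
  · simp only [ContinuousMap.pow_apply, sinSq_apply]
    norm_num

lemma hasDerivAt_arctan_add_arctan (z : ℝ) :
    HasDerivAt (fun z => Real.arctan (√2 * z + 1) + Real.arctan (√2 * z - 1)) (w₃ z) z := by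
  have hsq : √2 ^ 2 = 2 := Real.sq_sqrt zero_le_two
  have hplus : 1 + (√2 * z + 1) ^ 2 = 2 * (1 + z ^ 2 + √2 * z) := by
    linear_combination z ^ 2 * hsq
  have hminus : 1 + (√2 * z - 1) ^ 2 = 2 * (1 + z ^ 2 - √2 * z) := by
    linear_combination z ^ 2 * hsq
  have hfactor : 1 + z ^ 4 = (1 + z ^ 2 + √2 * z) * (1 + z ^ 2 - √2 * z) := by
    linear_combination z ^ 2 * hsq
  have hne : (1 + z ^ 2 + √2 * z) * (1 + z ^ 2 - √2 * z) ≠ 0 := hfactor ▸ by positivity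
  have hne₁ := left_ne_zero_of_mul hne
  have hne₂ := right_ne_zero_of_mul hne
  refine ((((hasDerivAt_id z).const_mul √2).add_const 1).arctan.add
    (((hasDerivAt_id z).const_mul √2).sub_const 1).arctan).congr_deriv ?_
  simp only [id, w₃_apply]
  rw [hplus, hminus, hfactor]
  generalize hplusFactor : 1 + z ^ 2 + √2 * z = a at hne₁ ⊢
  field_simp
  linear_combination -hplusFactor

lemma sinPowIntegral_zero_one : sinPowIntegral 0 1 = Real.pi / 2 := by
  have hθ : sinPowIntegral 0 =
      ⟨fun z => Real.arctan (√2 * z + 1) + Real.arctan (√2 * z - 1), by fun_prop⟩ := by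
    rw [sinPowIntegral, pow_zero, one_mul]
    refine primitiveFromZero_eq_of_hasDerivAt hasDerivAt_arctan_add_arctan ?_
    simp only [ContinuousMap.coe_mk, mul_zero, zero_add, zero_sub, Real.arctan_neg, add_neg_cancel]
  have hinv : √2 * 1 - 1 = (√2 * 1 + 1)⁻¹ := by
    refine eq_inv_of_mul_eq_one_left ?_
    linear_combination Real.sq_sqrt zero_le_two
  rw [hθ, ContinuousMap.coe_mk, hinv, Real.arctan_inv_of_pos (by positivity)]
  ring

lemma wallisCoeff_mul_sinPowIntegral_one :
    wallisCoeff k * sinPowIntegral k 1 = Real.pi / 2 := by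
  induction k with
  | zero => rw [wallisCoeff_zero, one_mul, sinPowIntegral_zero_one]
  | succ k ih =>
    have hrec : (2 * k + 1) * sinPowIntegral k 1 - (2 * k + 2) * sinPowIntegral (k + 1) 1 = 0 := by
      have h := DFunLike.congr_fun (sinPowIntegral_recurrence k) 1
      simp only [ContinuousMap.sub_apply, ContinuousMap.smul_apply, ContinuousMap.mul_apply,
        smul_eq_mul, sinMulCos_apply, one_pow, sub_self, mul_zero, zero_div] at h
      exact h
    have hpos : (2 * k + 1 : ℝ) ≠ 0 := by positivity
    refine mul_left_cancel₀ hpos ?_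
    linear_combination sinPowIntegral (k + 1) 1 * wallisCoeff_succ k - wallisCoeff k * hrec
      + (2 * k + 1) * ih

variable {k} {z : ℝ}

lemma sinSq_pow_mul_w₃_nonneg (z : ℝ) : 0 ≤ (sinSq ^ k * w₃) z :=
  mul_nonneg (pow_nonneg (sinSq_nonneg z) k) (w₃_nonneg z)

lemma sinPowIntegral_nonneg (hz : 0 ≤ z) : 0 ≤ sinPowIntegral k z :=
  primitiveFromZero_nonneg hz fun t _ => sinSq_pow_mul_w₃_nonneg t

lemma sinhPowIntegral_nonneg (hz : z ∈ Icc (0 : ℝ) 1) : 0 ≤ sinhPowIntegral k z :=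
  primitiveFromZero_nonneg hz.1 fun t ht =>
    mul_nonneg (pow_nonneg (sinSq_nonneg t) k) (w₂_nonneg ⟨ht.1, ht.2.trans hz.2⟩)

lemma wallisCoeff_mul_sinPowIntegral_le (hz : z ∈ Icc (0 : ℝ) 1) :
    wallisCoeff k * sinPowIntegral k z ≤ Real.pi / 2 := by
  rw [← wallisCoeff_mul_sinPowIntegral_one k]
  exact mul_le_mul_of_nonneg_left (primitiveFromZero_le_of_le hz.1 hz.2 fun t _ =>
    sinSq_pow_mul_w₃_nonneg t) (wallisCoeff_pos k).le

lemma sinPowIntegral_le_sinSq_pow_mul (hz : z ∈ Icc (0 : ℝ) 1) :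
    sinPowIntegral k z ≤ sinSq z ^ k * sinPowIntegral 0 z := by
  calc sinPowIntegral k z ≤ primitiveFromZero ((sinSq z ^ k) • (sinSq ^ 0 * w₃)) z := by
        refine primitiveFromZero_mono hz.1 fun t ht => ?_
        simp only [ContinuousMap.smul_apply, ContinuousMap.mul_apply, ContinuousMap.pow_apply,
          smul_eq_mul, pow_zero, one_mul]
        exact mul_le_mul_of_nonneg_right (pow_le_pow_left₀ (sinSq_nonneg t)
          (monotoneOn_sinSq ⟨ht.1, ht.2.trans hz.2⟩ hz ht.2) k) (w₃_nonneg t)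
    _ = sinSq z ^ k * sinPowIntegral 0 z := by
        rw [map_smul, ContinuousMap.smul_apply, smul_eq_mul, sinPowIntegral]

lemma tendsto_wallisCoeff_mul_sinPowIntegral (hz : z ∈ Ico (0 : ℝ) 1) :
    Tendsto (fun k => wallisCoeff k * sinPowIntegral k z) atTop (𝓝 0) := by
  have hz' : z ∈ Icc (0 : ℝ) 1 := Ico_subset_Icc_self hz
  have hq : |sinSq z| < 1 := by
    rw [abs_of_nonneg (sinSq_nonneg z)]
    exact sinSq_lt_one hz
  have hlim : Tendsto (fun k : ℕ => ((k : ℝ) + 1) * (sinSq z ^ k * sinPowIntegral 0 z))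
      atTop (𝓝 0) := by
    have h := ((tendsto_self_mul_const_pow_of_abs_lt_one hq).add
      (tendsto_pow_atTop_nhds_zero_of_abs_lt_one hq)).mul_const (sinPowIntegral 0 z)
    rw [add_zero, zero_mul] at h
    exact h.congr fun k => by ring
  refine squeeze_zero
    (fun k => mul_nonneg (wallisCoeff_pos k).le (sinPowIntegral_nonneg hz.1)) (fun k => ?_) hlim
  exact mul_le_mul (wallisCoeff_le k) (sinPowIntegral_le_sinSq_pow_mul hz')
    (sinPowIntegral_nonneg hz.1) (by positivity)

end Reduction

section OuterIntegral

/-- The two outermost integrations of `Ω_{3,1,2,3}(1)`, as a linear functional of what remains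
inside. -/
def outerIntegral : C(ℝ, ℝ) →ₗ[ℝ] ℝ where
  toFun f := primitiveFromZero (primitiveFromZero (f * w₂) * w₃) 1
  map_add' f g := by simp only [add_mul, map_add, ContinuousMap.add_apply]
  map_smul' c f := by
    simp only [smul_mul_assoc, map_smul, ContinuousMap.smul_apply, RingHom.id_apply]

lemma outerIntegral_apply (f : C(ℝ, ℝ)) :
    outerIntegral f = primitiveFromZero (primitiveFromZero (f * w₂) * w₃) 1 :=
  rfl

variable {f g : C(ℝ, ℝ)} (k : ℕ)

lemma outerIntegral_mono (h : ∀ t ∈ Icc (0 : ℝ) 1, f t ≤ g t) :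
    outerIntegral f ≤ outerIntegral g :=
  primitiveFromZero_mono zero_le_one fun z hz =>
    mul_le_mul_of_nonneg_right (primitiveFromZero_mono hz.1 fun t ht =>
      have ht' : t ∈ Icc (0 : ℝ) 1 := ⟨ht.1, ht.2.trans hz.2⟩
      mul_le_mul_of_nonneg_right (h t ht') (w₂_nonneg ht')) (w₃_nonneg z)

lemma outerIntegral_nonneg (h : ∀ t ∈ Icc (0 : ℝ) 1, 0 ≤ f t) : 0 ≤ outerIntegral f := by
  rw [← map_zero outerIntegral]
  exact outerIntegral_mono h

lemma mul_outerIntegral_sinSq_pow_mul_sinhMulCosh :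
    (2 * k + 2) * outerIntegral (sinSq ^ k * sinhMulCosh) = sinPowIntegral (k + 1) 1 := by
  rw [sinPowIntegral, ← smul_primitiveFromZero_sinSq_pow_mul_sinhMulCosh, smul_mul_assoc, map_smul,
    ContinuousMap.smul_apply, smul_eq_mul, outerIntegral_apply]

/-- The outer integral of `∫₀^φ sinh²ᵏ`, normalised so that `X k + X (k + 1) = 1 / (k + 1)²`. -/
def normalizedMoment : ℝ :=
  8 / Real.pi * wallisCoeff k * outerIntegral (sinhPowIntegral k)

lemma normalizedMoment_nonneg : 0 ≤ normalizedMoment k :=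
  mul_nonneg (mul_nonneg (by positivity) (wallisCoeff_pos k).le)
    (outerIntegral_nonneg fun _ ht => sinhPowIntegral_nonneg ht)

lemma normalizedMoment_add_succ :
    normalizedMoment k + normalizedMoment (k + 1) = 1 / ((k : ℝ) + 1) ^ 2 := by
  have hmoment : (2 * k + 1) * outerIntegral (sinhPowIntegral k)
      + (2 * k + 2) * outerIntegral (sinhPowIntegral (k + 1))
      = outerIntegral (sinSq ^ k * sinhMulCosh) := by
    rw [← sinhPowIntegral_recurrence, map_add, map_smul, map_smul, smul_eq_mul, smul_eq_mul]
  have houter := mul_outerIntegral_sinSq_pow_mul_sinhMulCosh k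
  have hwallis := wallisCoeff_mul_sinPowIntegral_one (k + 1)
  rw [normalizedMoment, normalizedMoment]
  field_simp
  linear_combination (-4 * (k + 1) * outerIntegral (sinhPowIntegral k)) * wallisCoeff_succ k
    + 4 * (k + 1) * wallisCoeff (k + 1) * hmoment + 2 * wallisCoeff (k + 1) * houter + 2 * hwallis

/-- The inner part `∫ (4ᵏ / C(2k, k)) (∫₀^θ sin²ᵏ) w₁ dz` left after splitting off `k` terms of the
expansion of `∫ θ w₁ dz`. -/
def remainder : C(ℝ, ℝ) :=
  primitiveFromZero ((wallisCoeff k • sinPowIntegral k) * w₁)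

lemma remainder_zero : remainder 0 = primitiveFromZero (primitiveFromZero w₃ * w₁) := by
  rw [remainder, wallisCoeff_zero, one_smul, sinPowIntegral, pow_zero, one_mul]

/- This is the expansion `θ tan θ = ∑ 4ᵏ / (2k C(2k, k)) sin²ᵏ θ`, one term at a time:
`w₁ = tan θ · w₂`, and the reduction formula rewrites `∫₀^θ sin²ᵏ` through `∫₀^θ sin²ᵏ⁺²`. -/
lemma remainder_eq_add_remainder_succ :
    remainder k = (wallisCoeff (k + 1) / (2 * k + 2)) • sinhPowIntegral (k + 1)
      + remainder (k + 1) := by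
  rw [remainder, remainder, sinhPowIntegral, ← map_smul, ← map_add]
  congr 1
  ext z
  have hrec : (2 * k + 1) * sinPowIntegral k z - (2 * k + 2) * sinPowIntegral (k + 1) z
      = sinSq z ^ k * sinMulCos z := DFunLike.congr_fun (sinPowIntegral_recurrence k) z
  simp only [ContinuousMap.add_apply, ContinuousMap.smul_apply, ContinuousMap.mul_apply,
    ContinuousMap.pow_apply, smul_eq_mul]
  field_simp
  linear_combination wallisCoeff (k + 1) * w₁ z * hrec
    - sinPowIntegral k z * w₁ z * wallisCoeff_succ k
    + wallisCoeff (k + 1) * sinSq z ^ k * sinMulCos_mul_w₁ z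

lemma outerIntegral_remainder_eq :
    outerIntegral (remainder k) = Real.pi / 16 * (normalizedMoment (k + 1) / (k + 1))
      + outerIntegral (remainder (k + 1)) := by
  rw [remainder_eq_add_remainder_succ, map_add, map_smul, smul_eq_mul, normalizedMoment]
  field_simp
  ring

lemma outerIntegral_remainder_zero_eq_sum_add (n : ℕ) :
    outerIntegral (remainder 0) =
      Real.pi / 16 * ∑ k ∈ Finset.range n, normalizedMoment (k + 1) / (k + 1)
        + outerIntegral (remainder n) := by
  induction n with
  | zero => rw [Finset.sum_range_zero, mul_zero, zero_add]
  | succ n ih =>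
    rw [ih, outerIntegral_remainder_eq n, Finset.sum_range_succ]
    ring

variable {k}

lemma remainder_integrand_nonneg {t : ℝ} (ht : 0 ≤ t) :
    0 ≤ ((wallisCoeff k • sinPowIntegral k) * w₁) t :=
  mul_nonneg (mul_nonneg (wallisCoeff_pos k).le (sinPowIntegral_nonneg ht)) (w₁_nonneg ht)

lemma tendsto_remainder_one : Tendsto (fun k => remainder k 1) atTop (𝓝 0) := by
  refine tendsto_primitiveFromZero_zero_of_dominated ((Real.pi / 2) • w₁) zero_le_one
    (fun k t ht => ?_) (fun t ht => ?_)
  · rw [Real.norm_of_nonneg (remainder_integrand_nonneg ht.1)]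
    exact mul_le_mul_of_nonneg_right (wallisCoeff_mul_sinPowIntegral_le ht) (w₁_nonneg ht.1)
  · have h := (tendsto_wallisCoeff_mul_sinPowIntegral ht).mul_const (w₁ t)
    rw [zero_mul] at h
    exact h

lemma tendsto_outerIntegral_remainder :
    Tendsto (fun k => outerIntegral (remainder k)) atTop (𝓝 0) := by
  have hlim : Tendsto (fun k => remainder k 1 * outerIntegral 1) atTop (𝓝 0) := by
    simpa only [zero_mul] using tendsto_remainder_one.mul_const (outerIntegral 1)
  refine squeeze_zero (fun k => outerIntegral_nonneg fun z hz =>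
    primitiveFromZero_nonneg hz.1 fun t ht => remainder_integrand_nonneg ht.1) (fun k => ?_) hlim
  rw [← smul_eq_mul, ← map_smul]
  refine outerIntegral_mono fun z hz => ?_
  rw [ContinuousMap.smul_apply, ContinuousMap.one_apply, smul_eq_mul, mul_one]
  exact primitiveFromZero_le_of_le hz.1 hz.2 fun t ht => remainder_integrand_nonneg ht.1

lemma tendsto_sum_normalizedMoment_div :
    Tendsto (fun n : ℕ => Real.pi / 16 * ∑ k ∈ Finset.range n, normalizedMoment (k + 1) / (k + 1))
      atTop (𝓝 (outerIntegral (remainder 0))) := by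
  have h := tendsto_outerIntegral_remainder.const_sub (outerIntegral (remainder 0))
  rw [sub_zero] at h
  exact h.congr fun n => sub_eq_of_eq_add (outerIntegral_remainder_zero_eq_sum_add n)

end OuterIntegral

section HasIntegralOn

/-- `f` is Lebesgue integrable on `s` with integral `c`. Unlike a bare equation for `∫ x in s, f x`,
this excludes the junk value `0` of a divergent integral. -/
structure HasIntegralOn (f : ℝ → ℝ) (s : Set ℝ) (c : ℝ) : Prop where
  integrableOn : IntegrableOn f s
  integral_eq : ∫ x in s, f x = c

variable {f g : ℝ → ℝ} {s t : Set ℝ} {c d : ℝ}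

lemma HasIntegralOn.unique (hc : HasIntegralOn f s c) (hd : HasIntegralOn f s d) : c = d :=
  hc.integral_eq.symm.trans hd.integral_eq

lemma HasIntegralOn.congr (h : HasIntegralOn f s c) (hs : MeasurableSet s) (hfg : EqOn f g s) :
    HasIntegralOn g s c :=
  ⟨h.integrableOn.congr_fun hfg hs, setIntegral_congr_fun hs hfg ▸ h.integral_eq⟩

lemma HasIntegralOn.sub (hf : HasIntegralOn f s c) (hg : HasIntegralOn g s d) :
    HasIntegralOn (fun x => f x - g x) s (c - d) :=
  ⟨hf.integrableOn.sub hg.integrableOn, by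
    rw [integral_sub hf.integrableOn hg.integrableOn, hf.integral_eq, hg.integral_eq]⟩

lemma HasIntegralOn.const_mul (h : HasIntegralOn f s c) (a : ℝ) :
    HasIntegralOn (fun x => a * f x) s (a * c) :=
  ⟨h.integrableOn.const_mul a, by rw [integral_const_mul, h.integral_eq]⟩

lemma HasIntegralOn.comp_bijOn {φ φ' : ℝ → ℝ} (h : HasIntegralOn f t c) (hs : MeasurableSet s)
    (hφ : BijOn φ s t) (hφ' : ∀ x ∈ s, HasDerivAt φ (φ' x) x) :
    HasIntegralOn (fun x => |φ' x| * f (φ x)) s c := by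
  have hderiv : ∀ x ∈ s, HasDerivWithinAt φ (φ' x) s x := fun x hx => (hφ' x hx).hasDerivWithinAt
  refine ⟨(integrableOn_image_iff_integrableOn_abs_deriv_smul hs hderiv hφ.injOn f).1 ?_,
    (integral_image_eq_integral_abs_deriv_smul hs hderiv hφ.injOn f).symm.trans ?_⟩
  · rw [hφ.image_eq]
    exact h.integrableOn
  · rw [hφ.image_eq]
    exact h.integral_eq

lemma hasIntegralOn_Ioo_of_continuousOn {a b : ℝ} (hab : a ≤ b) (hf : ContinuousOn f (Icc a b)) :
    HasIntegralOn f (Ioo a b) (∫ x in a..b, f x) :=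
  ⟨hf.integrableOn_Icc.mono_set Ioo_subset_Icc_self, by
    rw [intervalIntegral.integral_of_le hab, integral_Ioc_eq_integral_Ioo]⟩

variable {F : ℕ → ℝ → ℝ} {c : ℕ → ℝ} {C : ℝ}

lemma HasIntegralOn.sum_range (hF : ∀ k, HasIntegralOn (F k) s (c k)) (n : ℕ) :
    HasIntegralOn (fun x => ∑ k ∈ Finset.range n, F k x) s (∑ k ∈ Finset.range n, c k) :=
  ⟨integrable_finsetSum _ fun k _ => (hF k).integrableOn, by
    rw [integral_finsetSum _ fun k _ => (hF k).integrableOn]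
    exact Finset.sum_congr rfl fun k _ => (hF k).integral_eq⟩

lemma HasIntegralOn.of_hasSum_of_nonneg (hs : MeasurableSet s)
    (hF : ∀ k, HasIntegralOn (F k) s (c k)) (hF0 : ∀ k, ∀ x ∈ s, 0 ≤ F k x)
    (hf : ∀ x ∈ s, HasSum (fun k => F k x) (f x)) (hc : HasSum c C) : HasIntegralOn f s C := by
  set S : ℕ → ℝ → ℝ := fun n x => ∑ k ∈ Finset.range n, F k x
  have hS (n : ℕ) : HasIntegralOn (S n) s (∑ k ∈ Finset.range n, c k) := .sum_range hF n
  have hlim : ∀ᵐ x ∂volume.restrict s, Tendsto (fun n => S n x) atTop (𝓝 (f x)) := by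
    filter_upwards [ae_restrict_mem hs] with x hx using (hf x hx).tendsto_sum_nat
  have hmono : ∀ᵐ x ∂volume.restrict s, Monotone fun n => S n x := by
    filter_upwards [ae_restrict_mem hs] with x hx
    exact monotone_nat_of_le_succ fun n => by
      simpa only [S, Finset.sum_range_succ, le_add_iff_nonneg_right] using hF0 n x hx
  have hbound (n : ℕ) : ∫⁻ x in s, ‖S n x‖ₑ ≤ ENNReal.ofReal C := by
    have hS0 : 0 ≤ᵐ[volume.restrict s] S n := by
      filter_upwards [ae_restrict_mem hs] with x hx using Finset.sum_nonneg fun k _ => hF0 k x hx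
    have hc0 (k : ℕ) : 0 ≤ c k := (hF k).integral_eq ▸ setIntegral_nonneg hs (hF0 k)
    rw [← ofReal_integral_norm_eq_lintegral_enorm (hS n).integrableOn,
      integral_congr_ae (hS0.mono fun x hx => Real.norm_of_nonneg hx), (hS n).integral_eq]
    exact ENNReal.ofReal_le_ofReal (sum_le_hasSum _ (fun k _ => hc0 k) hc)
  have hint : IntegrableOn f s := by
    refine integrable_of_tendsto hlim (fun n => (hS n).integrableOn.aestronglyMeasurable) ?_
    exact ((liminf_le_of_frequently_le' (.of_forall hbound)).trans_lt ENNReal.ofReal_lt_top).ne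
  have hconv := integral_tendsto_of_tendsto_of_monotone (fun n => (hS n).integrableOn) hint
    hmono hlim
  simp only [(hS _).integral_eq] at hconv
  exact ⟨hint, tendsto_nhds_unique hconv hc.tendsto_sum_nat⟩

end HasIntegralOn

section ZetaSums

variable {k : ℕ}

lemma hasSum_one_div_add_one_pow_ofReal (hk : 1 < k) :
    HasSum (fun n : ℕ => ((1 / ((n : ℝ) + 1) ^ k : ℝ) : ℂ)) (riemannZeta k) := by
  have hsummable : Summable fun n : ℕ => 1 / ((n : ℝ) + 1) ^ k := by
    simpa only [Nat.cast_add, Nat.cast_one] using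
      (summable_nat_add_iff 1).2 (Real.summable_one_div_nat_pow.2 hk)
  rw [show riemannZeta k = ∑' n : ℕ, ((1 / ((n : ℝ) + 1) ^ k : ℝ) : ℂ) by
    rw [zeta_eq_tsum_one_div_nat_add_one_cpow (by exact_mod_cast hk)]
    simp only [Complex.cpow_natCast]
    push_cast
    rfl]
  exact (Complex.hasSum_ofReal.2 hsummable.hasSum).summable.hasSum

lemma hasSum_one_div_add_one_pow (hk : 1 < k) :
    HasSum (fun n : ℕ => 1 / ((n : ℝ) + 1) ^ k) (riemannZeta k).re :=
  Complex.hasSum_re (hasSum_one_div_add_one_pow_ofReal hk)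

lemma ofReal_re_riemannZeta (hk : 1 < k) : ((riemannZeta k).re : ℂ) = riemannZeta k :=
  (Complex.hasSum_ofReal.2 (hasSum_one_div_add_one_pow hk)).unique
    (hasSum_one_div_add_one_pow_ofReal hk)

lemma hasSum_one_div_add_one_sq :
    HasSum (fun n : ℕ => 1 / ((n : ℝ) + 1) ^ 2) (Real.pi ^ 2 / 6) := by
  have h := hasSum_one_div_add_one_pow one_lt_two
  rw [Nat.cast_ofNat, riemannZeta_two] at h
  exact_mod_cast h

lemma hasSum_one_div_add_one_cube :
    HasSum (fun n : ℕ => 1 / ((n : ℝ) + 1) ^ 3) (riemannZeta 3).re :=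
  hasSum_one_div_add_one_pow (by norm_num)

lemma hasSum_one_div_two_mul_add_two_pow {C : ℝ}
    (h : HasSum (fun n : ℕ => 1 / ((n : ℝ) + 1) ^ k) C) :
    HasSum (fun n : ℕ => 1 / (((2 * n + 1 : ℕ) : ℝ) + 1) ^ k) (C / 2 ^ k) := by
  refine (h.div_const (2 ^ k)).congr_fun fun n => ?_
  rw [div_div, ← mul_pow]
  push_cast
  ring_nf

lemma hasSum_one_div_two_mul_add_one_pow {C : ℝ}
    (h : HasSum (fun n : ℕ => 1 / ((n : ℝ) + 1) ^ k) C) :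
    HasSum (fun n : ℕ => 1 / (((2 * n : ℕ) : ℝ) + 1) ^ k) (C - C / 2 ^ k) := by
  have hsummable : Summable fun n : ℕ => 1 / (((2 * n : ℕ) : ℝ) + 1) ^ k :=
    h.summable.comp_injective (i := fun n : ℕ => 2 * n) (mul_right_injective₀ two_ne_zero)
  have hsplit := hsummable.hasSum.even_add_odd (f := fun n : ℕ => 1 / ((n : ℝ) + 1) ^ k)
    (hasSum_one_div_two_mul_add_two_pow h)
  rw [← eq_sub_of_add_eq (hsplit.unique h)]
  exact hsummable.hasSum

lemma hasSum_neg_one_pow_mul_one_div_add_one_pow {C : ℝ}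
    (h : HasSum (fun n : ℕ => 1 / ((n : ℝ) + 1) ^ k) C) :
    HasSum (fun n : ℕ => (-1) ^ n * (1 / ((n : ℝ) + 1) ^ k)) (C - C / 2 ^ k + -(C / 2 ^ k)) := by
  refine HasSum.even_add_odd ?_ ?_
  · simpa only [pow_mul, neg_one_sq, one_pow, one_mul] using hasSum_one_div_two_mul_add_one_pow h
  · refine (hasSum_one_div_two_mul_add_two_pow h).neg.congr_fun fun n => ?_
    rw [(odd_two_mul_add_one n).neg_one_pow, neg_one_mul]

end ZetaSums

section LogIntegrals

lemma hasIntegralOn_pow_mul_exp_neg_mul (m : ℕ) {r : ℝ} (hr : 0 < r) :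
    HasIntegralOn (fun t => t ^ m * Real.exp (-(r * t))) (Ioi 0) (m.factorial / r ^ (m + 1)) := by
  constructor
  · simpa only [Real.rpow_natCast, Real.rpow_one, neg_mul] using
      integrableOn_rpow_mul_exp_neg_mul_rpow (p := 1) (s := m) (b := r)
        (neg_one_lt_zero.trans_le m.cast_nonneg) one_pos hr
  · have h := Real.integral_rpow_mul_exp_neg_mul_Ioi (a := m + 1) (by positivity) hr
    rw [Real.Gamma_nat_eq_factorial] at h
    simp only [add_sub_cancel_right, Real.rpow_natCast] at h
    rw [h, ← Nat.cast_add_one, Real.rpow_natCast, one_div, inv_pow, inv_mul_eq_div]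

lemma bijOn_neg_log : BijOn (fun x => -Real.log x) (Ioo 0 1) (Ioi 0) :=
  InvOn.bijOn (f' := fun t => Real.exp (-t))
    ⟨fun x hx => by simp only [neg_neg, Real.exp_log hx.1],
      fun t _ => by simp only [Real.log_exp, neg_neg]⟩
    (fun _ hx => neg_pos.2 (Real.log_neg hx.1 hx.2))
    (fun t ht => ⟨Real.exp_pos _, Real.exp_lt_one_iff.2 (neg_lt_zero.2 ht)⟩)

lemma hasIntegralOn_pow_mul_neg_log_pow (n m : ℕ) :
    HasIntegralOn (fun x => x ^ n * (-Real.log x) ^ m) (Ioo 0 1)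
      (m.factorial / ((n : ℝ) + 1) ^ (m + 1)) := by
  have hr : (0 : ℝ) < n + 1 := by positivity
  refine ((hasIntegralOn_pow_mul_exp_neg_mul m hr).comp_bijOn measurableSet_Ioo bijOn_neg_log
    fun x hx => (Real.hasDerivAt_log hx.1.ne').neg).congr measurableSet_Ioo fun x hx => ?_
  have hexp : Real.exp (-((n + 1) * -Real.log x)) = x ^ (n + 1) := by
    rw [mul_neg, neg_neg, ← Nat.cast_add_one, Real.exp_nat_mul, Real.exp_log hx.1]
  have hx0 := hx.1.ne'
  simp only [hexp, abs_neg, abs_inv, abs_of_pos hx.1]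
  field_simp
  ring

lemma hasIntegralOn_neg_log_pow_div_one_sub {m : ℕ} (hm : m ≠ 0) :
    HasIntegralOn (fun x => (-Real.log x) ^ m / (1 - x)) (Ioo 0 1)
      (m.factorial * (riemannZeta (m + 1 : ℕ)).re) := by
  refine .of_hasSum_of_nonneg measurableSet_Ioo (hasIntegralOn_pow_mul_neg_log_pow · m)
    (fun n x hx => ?_) (fun x hx => ?_) ?_
  · exact mul_nonneg (pow_nonneg hx.1.le n)
      (pow_nonneg (neg_nonneg.2 (Real.log_nonpos hx.1.le hx.2.le)) m)
  · rw [div_eq_inv_mul]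
    exact (hasSum_geometric_of_lt_one hx.1.le hx.2).mul_right _
  · simpa only [mul_one_div] using
      (hasSum_one_div_add_one_pow (by lia : 1 < m + 1)).mul_left (m.factorial : ℝ)

lemma hasIntegralOn_neg_log_pow_div_one_sub_sq {m : ℕ} (hm : m ≠ 0) :
    HasIntegralOn (fun x => (-Real.log x) ^ m / (1 - x ^ 2)) (Ioo 0 1)
      (m.factorial *
        ((riemannZeta (m + 1 : ℕ)).re - (riemannZeta (m + 1 : ℕ)).re / 2 ^ (m + 1))) := by
  refine .of_hasSum_of_nonneg measurableSet_Ioo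
    (fun n => hasIntegralOn_pow_mul_neg_log_pow (2 * n) m) (fun n x hx => ?_) (fun x hx => ?_) ?_
  · exact mul_nonneg (pow_nonneg hx.1.le _)
      (pow_nonneg (neg_nonneg.2 (Real.log_nonpos hx.1.le hx.2.le)) m)
  · simp only [div_eq_inv_mul, pow_mul]
    exact (hasSum_geometric_of_lt_one (sq_nonneg x)
      (pow_lt_one₀ hx.1.le hx.2 two_ne_zero)).mul_right _
  · simpa only [mul_one_div] using (hasSum_one_div_two_mul_add_one_pow
      (hasSum_one_div_add_one_pow (by lia : 1 < m + 1))).mul_left (m.factorial : ℝ)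

lemma bijOn_one_sub_sq : BijOn (fun x : ℝ => 1 - x ^ 2) (Ioo 0 1) (Ioo 0 1) :=
  InvOn.bijOn (f' := fun y => √(1 - y))
    ⟨fun x hx => by simp only [sub_sub_cancel, Real.sqrt_sq hx.1.le],
      fun y hy => by simp only [Real.sq_sqrt (sub_nonneg.2 hy.2.le), sub_sub_cancel]⟩
    (fun _ hx => ⟨sub_pos.2 (pow_lt_one₀ hx.1.le hx.2 two_ne_zero),
      sub_lt_self 1 (pow_pos hx.1 2)⟩)
    (fun _ hy => ⟨Real.sqrt_pos.2 (sub_pos.2 hy.2),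
      (Real.sqrt_lt' one_pos).2 (by rw [one_pow]; exact sub_lt_self 1 hy.1)⟩)

lemma bijOn_one_sub_div_one_add : BijOn (fun x : ℝ => (1 - x) / (1 + x)) (Ioo 0 1) (Ioo 0 1) := by
  have hmaps : MapsTo (fun x : ℝ => (1 - x) / (1 + x)) (Ioo 0 1) (Ioo 0 1) := fun x hx => by
    have hpos : 0 < 1 + x := by linarith [hx.1]
    exact ⟨div_pos (sub_pos.2 hx.2) hpos, (div_lt_one hpos).2 (by linarith [hx.1])⟩
  have hinv : LeftInvOn (fun x : ℝ => (1 - x) / (1 + x)) (fun x => (1 - x) / (1 + x))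
      (Ioo 0 1) := fun x hx => by
    have hpos : 1 + x ≠ 0 := by linarith [hx.1]
    have hden : 1 + (1 - x) / (1 + x) = 2 / (1 + x) := by field_simp; ring
    simp only [hden]
    field_simp
    ring
  exact InvOn.bijOn ⟨hinv, hinv⟩ hmaps hmaps

lemma hasIntegralOn_log_one_sub_add_log_one_add_sq_div :
    HasIntegralOn (fun x => (Real.log (1 - x) + Real.log (1 + x)) ^ 2 / x) (Ioo 0 1)
      (riemannZeta 3).re := by
  have hderiv (x : ℝ) : HasDerivAt (fun x : ℝ => 1 - x ^ 2) (-(2 * x)) x := by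
    simpa using (hasDerivAt_pow 2 x).const_sub 1
  have h := (((hasIntegralOn_neg_log_pow_div_one_sub two_ne_zero).comp_bijOn measurableSet_Ioo
    bijOn_one_sub_sq fun x _ => hderiv x).const_mul (1 / 2))
  convert h.congr measurableSet_Ioo fun x hx => ?_ using 1
  · norm_num
    ring
  · have hx0 : 0 < x := hx.1
    have hlog : Real.log (1 - x ^ 2) = Real.log (1 - x) + Real.log (1 + x) := by
      rw [← Real.log_mul (by linarith [hx.2]) (by linarith)]
      ring_nf
    simp only [hlog, abs_neg, abs_of_pos (mul_pos two_pos hx0), sub_sub_cancel]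
    field_simp

lemma hasIntegralOn_log_one_sub_sub_log_one_add_sq_div :
    HasIntegralOn (fun x => (Real.log (1 - x) - Real.log (1 + x)) ^ 2 / x) (Ioo 0 1)
      (7 / 2 * (riemannZeta 3).re) := by
  have hderiv (x : ℝ) (hx : x ∈ Ioo (0 : ℝ) 1) :
      HasDerivAt (fun x : ℝ => (1 - x) / (1 + x)) (-(2 / (1 + x) ^ 2)) x := by
    have hpos : 1 + x ≠ 0 := by linarith [hx.1]
    refine (((hasDerivAt_id x).const_sub 1).div ((hasDerivAt_id x).const_add 1) hpos).congr_deriv ?_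
    simp only [id]
    ring
  have h := ((hasIntegralOn_neg_log_pow_div_one_sub_sq two_ne_zero).comp_bijOn measurableSet_Ioo
    bijOn_one_sub_div_one_add hderiv).const_mul 2
  convert h.congr measurableSet_Ioo fun x hx => ?_ using 1
  · norm_num
    ring
  · have hx0 : 0 < x := hx.1
    have hpos : 0 < 1 + x := by linarith
    have hlog : Real.log ((1 - x) / (1 + x)) = Real.log (1 - x) - Real.log (1 + x) :=
      Real.log_div (sub_ne_zero.2 hx.2.ne') hpos.ne'
    have hden : 1 - ((1 - x) / (1 + x)) ^ 2 = 4 * x / (1 + x) ^ 2 := by field_simp; ring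
    simp only [hlog, hden, abs_neg, abs_of_pos (div_pos two_pos (pow_pos hpos 2))]
    field_simp
    ring

/- Polarisation: `4ab = (a + b)² - (a - b)²`. -/
lemma hasIntegralOn_neg_log_one_sub_div_mul_log_one_add :
    HasIntegralOn (fun x => -Real.log (1 - x) / x * Real.log (1 + x)) (Ioo 0 1)
      (5 / 8 * (riemannZeta 3).re) := by
  convert ((hasIntegralOn_log_one_sub_sub_log_one_add_sq_div.sub
    hasIntegralOn_log_one_sub_add_log_one_add_sq_div).const_mul (1 / 4)) using 1
  · ext x
    ring
  · ring

end LogIntegrals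

section PowDivOneAdd

/-- The moments `∫₀¹ xᵏ / (1 + x) dx`, the sequence with `Z k + Z (k + 1) = 1 / (k + 1)` that tends
to `0`. -/
def powDivOneAddIntegral (k : ℕ) : ℝ := ∫ x in (0 : ℝ)..1, x ^ k / (1 + x)

lemma one_add_ne_zero_of_mem_Icc {x : ℝ} (hx : x ∈ Icc (0 : ℝ) 1) : 1 + x ≠ 0 := by
  linarith [hx.1]

lemma hasDerivAt_log_one_add {x : ℝ} (hx : 1 + x ≠ 0) :
    HasDerivAt (fun x => Real.log (1 + x)) (1 / (1 + x)) x :=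
  ((hasDerivAt_id x).const_add 1).log hx

variable (k : ℕ)

lemma continuousOn_pow_div_one_add : ContinuousOn (fun x : ℝ => x ^ k / (1 + x)) (Icc 0 1) :=
  ContinuousOn.div (by fun_prop) (by fun_prop) fun _ hx => one_add_ne_zero_of_mem_Icc hx

lemma continuousOn_pow_mul_log_one_add :
    ContinuousOn (fun x : ℝ => x ^ k * Real.log (1 + x)) (Icc 0 1) :=
  ContinuousOn.mul (by fun_prop)
    (ContinuousOn.log (by fun_prop) fun _ hx => one_add_ne_zero_of_mem_Icc hx)

lemma intervalIntegrable_pow_div_one_add :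
    IntervalIntegrable (fun x : ℝ => x ^ k / (1 + x)) volume 0 1 :=
  (continuousOn_pow_div_one_add k).intervalIntegrable_of_Icc zero_le_one

lemma powDivOneAddIntegral_nonneg : 0 ≤ powDivOneAddIntegral k :=
  intervalIntegral.integral_nonneg zero_le_one fun _ hx =>
    div_nonneg (pow_nonneg hx.1 k) (add_nonneg zero_le_one hx.1)

lemma powDivOneAddIntegral_add_succ :
    powDivOneAddIntegral k + powDivOneAddIntegral (k + 1) = 1 / (k + 1) := by
  calc powDivOneAddIntegral k + powDivOneAddIntegral (k + 1)
      = ∫ x in (0 : ℝ)..1, (x ^ k / (1 + x) + x ^ (k + 1) / (1 + x)) :=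
        (intervalIntegral.integral_add (intervalIntegrable_pow_div_one_add k)
          (intervalIntegrable_pow_div_one_add (k + 1))).symm
    _ = ∫ x in (0 : ℝ)..1, x ^ k := by
        refine intervalIntegral.integral_congr fun x hx => ?_
        rw [uIcc_of_le zero_le_one] at hx
        have := one_add_ne_zero_of_mem_Icc hx
        field_simp
        ring
    _ = 1 / (k + 1) := by
        rw [integral_pow, one_pow, zero_pow k.succ_ne_zero, sub_zero]

lemma powDivOneAddIntegral_zero : powDivOneAddIntegral 0 = Real.log 2 := by
  have hderiv : ∀ x ∈ uIcc (0 : ℝ) 1, HasDerivAt (fun x => Real.log (1 + x)) (x ^ 0 / (1 + x)) x :=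
    fun x hx => by
      rw [uIcc_of_le zero_le_one] at hx
      rw [pow_zero]
      exact hasDerivAt_log_one_add (one_add_ne_zero_of_mem_Icc hx)
  rw [powDivOneAddIntegral, intervalIntegral.integral_eq_sub_of_hasDerivAt hderiv
    (intervalIntegrable_pow_div_one_add 0)]
  norm_num

lemma tendsto_powDivOneAddIntegral : Tendsto powDivOneAddIntegral atTop (𝓝 0) :=
  squeeze_zero powDivOneAddIntegral_nonneg
    (fun k => powDivOneAddIntegral_add_succ k ▸
      le_add_of_nonneg_right (powDivOneAddIntegral_nonneg (k + 1)))
    tendsto_one_div_add_atTop_nhds_zero_nat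

lemma integral_pow_mul_log_one_add :
    ∫ x in (0 : ℝ)..1, x ^ k * Real.log (1 + x)
      = (Real.log 2 - powDivOneAddIntegral (k + 1)) / (k + 1) := by
  have hderiv : ∀ x ∈ uIcc (0 : ℝ) 1, HasDerivAt (fun x => x ^ (k + 1) * Real.log (1 + x))
      ((k + 1) * (x ^ k * Real.log (1 + x)) + x ^ (k + 1) / (1 + x)) x := fun x hx => by
    rw [uIcc_of_le zero_le_one] at hx
    refine ((hasDerivAt_pow (k + 1) x).mul
      (hasDerivAt_log_one_add (one_add_ne_zero_of_mem_Icc hx))).congr_deriv ?_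
    push_cast
    ring
  have hlog : IntervalIntegrable (fun x => (k + 1) * (x ^ k * Real.log (1 + x))) volume 0 1 :=
    ((continuousOn_pow_mul_log_one_add k).intervalIntegrable_of_Icc zero_le_one).const_mul _
  have hdiv := intervalIntegrable_pow_div_one_add (k + 1)
  have hparts := intervalIntegral.integral_eq_sub_of_hasDerivAt hderiv (hlog.add hdiv)
  rw [intervalIntegral.integral_add hlog hdiv, intervalIntegral.integral_const_mul,
    ← powDivOneAddIntegral, one_pow, one_mul, zero_pow k.succ_ne_zero, zero_mul, sub_zero,
    one_add_one_eq_two] at hparts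
  rw [eq_div_iff (by positivity), mul_comm]
  exact eq_sub_of_add_eq hparts

lemma hasIntegralOn_pow_mul_log_one_add_div :
    HasIntegralOn (fun x => 1 / ((k : ℝ) + 1) * (x ^ k * Real.log (1 + x))) (Ioo 0 1)
      ((Real.log 2 - powDivOneAddIntegral (k + 1)) / ((k : ℝ) + 1) ^ 2) := by
  convert (hasIntegralOn_Ioo_of_continuousOn zero_le_one
    (continuousOn_pow_mul_log_one_add k)).const_mul (1 / ((k : ℝ) + 1)) using 1
  rw [integral_pow_mul_log_one_add]
  field_simp

lemma hasSum_log_two_sub_powDivOneAddIntegral_div_sq :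
    HasSum (fun k : ℕ => (Real.log 2 - powDivOneAddIntegral (k + 1)) / ((k : ℝ) + 1) ^ 2)
      (5 / 8 * (riemannZeta 3).re) := by
  have hnonneg (k : ℕ) (x : ℝ) (hx : x ∈ Ioo (0 : ℝ) 1) :
      0 ≤ 1 / ((k : ℝ) + 1) * (x ^ k * Real.log (1 + x)) :=
    mul_nonneg (by positivity)
      (mul_nonneg (pow_nonneg hx.1.le k) (Real.log_nonneg (by linarith [hx.1])))
  have hseries (x : ℝ) (hx : x ∈ Ioo (0 : ℝ) 1) :
      HasSum (fun k : ℕ => 1 / ((k : ℝ) + 1) * (x ^ k * Real.log (1 + x)))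
        (-Real.log (1 - x) / x * Real.log (1 + x)) := by
    have hx0 := hx.1.ne'
    have hlog := Real.hasSum_pow_div_log_of_abs_lt_one ((abs_of_pos hx.1).trans_lt hx.2)
    refine ((hlog.div_const x).mul_right (Real.log (1 + x))).congr_fun fun k => ?_
    field_simp
    ring
  have hsummable : Summable fun k : ℕ =>
      (Real.log 2 - powDivOneAddIntegral (k + 1)) / ((k : ℝ) + 1) ^ 2 := by
    refine Summable.of_nonneg_of_le (fun k => ?_) (fun k => ?_)
      (hasSum_one_div_add_one_sq.summable.mul_left (Real.log 2))
    · rw [← (hasIntegralOn_pow_mul_log_one_add_div k).integral_eq]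
      exact setIntegral_nonneg measurableSet_Ioo (hnonneg k)
    · rw [mul_one_div]
      gcongr
      exact sub_le_self _ (powDivOneAddIntegral_nonneg (k + 1))
  rw [hasIntegralOn_neg_log_one_sub_div_mul_log_one_add.unique (.of_hasSum_of_nonneg
    measurableSet_Ioo hasIntegralOn_pow_mul_log_one_add_div hnonneg hseries hsummable.hasSum)]
  exact hsummable.hasSum

lemma hasSum_powDivOneAddIntegral_div_sq :
    HasSum (fun k : ℕ => powDivOneAddIntegral k / ((k : ℝ) + 1) ^ 2)
      (13 / 8 * (riemannZeta 3).re - Real.log 2 * (Real.pi ^ 2 / 6)) := by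
  have hvalue : 13 / 8 * (riemannZeta 3).re - Real.log 2 * (Real.pi ^ 2 / 6)
      = (riemannZeta 3).re - Real.log 2 * (Real.pi ^ 2 / 6) + 5 / 8 * (riemannZeta 3).re := by ring
  rw [hvalue]
  refine ((hasSum_one_div_add_one_cube.sub (hasSum_one_div_add_one_sq.mul_left (Real.log 2))).add
    hasSum_log_two_sub_powDivOneAddIntegral_div_sq).congr_fun fun k => ?_
  rw [eq_sub_of_add_eq (powDivOneAddIntegral_add_succ k)]
  field_simp
  ring

end PowDivOneAdd

section AddSucc

variable {R : Type*} [CommRing R] {X Z u v : ℕ → R}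

lemma sum_range_neg_one_pow_mul_of_add_succ (hX : ∀ k, X k + X (k + 1) = u k) (n : ℕ) :
    ∑ k ∈ Finset.range n, (-1) ^ k * u k = X 0 - (-1) ^ n * X n := by
  induction n with
  | zero => rw [Finset.sum_range_zero, pow_zero, one_mul, sub_self]
  | succ n ih =>
    rw [Finset.sum_range_succ, ih, ← hX n]
    ring

lemma sum_range_succ_mul_of_add_succ (hX : ∀ k, X k + X (k + 1) = u k)
    (hZ : ∀ k, Z k + Z (k + 1) = v k) (n : ℕ) :
    ∑ k ∈ Finset.range n, X (k + 1) * v k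
      = ∑ k ∈ Finset.range n, Z k * u k - Z 0 * X 0 + Z n * X n := by
  induction n with
  | zero => rw [Finset.sum_range_zero, Finset.sum_range_zero, zero_sub, neg_add_cancel]
  | succ n ih =>
    rw [Finset.sum_range_succ, Finset.sum_range_succ, ih, ← hX n, ← hZ n]
    ring

lemma eq_of_add_succ_of_hasSum_neg_one_pow_mul {X u : ℕ → ℝ} {a : ℝ}
    (hX : ∀ k, X k + X (k + 1) = u k) (hlim : Tendsto X atTop (𝓝 0))
    (hu : HasSum (fun k => (-1) ^ k * u k) a) : X 0 = a := by
  have hzero : Tendsto (fun n => (-1) ^ n * X n) atTop (𝓝 0) := by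
    refine squeeze_zero_norm (fun n => le_of_eq ?_) (tendsto_zero_iff_norm_tendsto_zero.1 hlim)
    rw [norm_mul, norm_pow, norm_neg, norm_one, one_pow, one_mul]
  have hsum := hzero.const_sub (X 0)
  simp only [← sum_range_neg_one_pow_mul_of_add_succ hX, sub_zero] at hsum
  exact tendsto_nhds_unique hsum hu.tendsto_sum_nat

end AddSucc

section NormalizedMoment

lemma tendsto_normalizedMoment : Tendsto normalizedMoment atTop (𝓝 0) :=
  squeeze_zero normalizedMoment_nonneg
    (fun k => normalizedMoment_add_succ k ▸
      le_add_of_nonneg_right (normalizedMoment_nonneg (k + 1)))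
    hasSum_one_div_add_one_sq.summable.tendsto_atTop_zero

lemma normalizedMoment_zero : normalizedMoment 0 = Real.pi ^ 2 / 12 := by
  rw [eq_of_add_succ_of_hasSum_neg_one_pow_mul normalizedMoment_add_succ tendsto_normalizedMoment
    (hasSum_neg_one_pow_mul_one_div_add_one_pow hasSum_one_div_add_one_sq)]
  ring

lemma tendsto_sum_normalizedMoment_succ_div :
    Tendsto (fun n => ∑ k ∈ Finset.range n, normalizedMoment (k + 1) / (k + 1)) atTop
      (𝓝 (13 / 8 * (riemannZeta 3).re - Real.log 2 * (Real.pi ^ 2 / 4))) := by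
  have hparts (n : ℕ) := sum_range_succ_mul_of_add_succ normalizedMoment_add_succ
    powDivOneAddIntegral_add_succ n
  simp only [mul_one_div] at hparts
  simp only [hparts]
  convert (hasSum_powDivOneAddIntegral_div_sq.tendsto_sum_nat.sub_const
    (powDivOneAddIntegral 0 * normalizedMoment 0)).add
    (tendsto_powDivOneAddIntegral.mul tendsto_normalizedMoment) using 2
  rw [powDivOneAddIntegral_zero, normalizedMoment_zero]
  ring

lemma outerIntegral_remainder_zero :
    outerIntegral (remainder 0)
      = Real.pi / 16 * (13 / 8 * (riemannZeta 3).re - Real.log 2 * (Real.pi ^ 2 / 4)) :=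
  tendsto_nhds_unique tendsto_sum_normalizedMoment_div
    (tendsto_sum_normalizedMoment_succ_div.const_mul (Real.pi / 16))

end NormalizedMoment

lemma Omega_F₃_F₁_F₂_F₃_one :
    Omega [F₃, F₁, F₂, F₃] 1 = 16 * Complex.I * outerIntegral (remainder 0) := by
  have h₀ (t : ℝ) : Omega [] t = 1 * (1 : C(ℝ, ℝ)) t := by
    rw [ContinuousMap.one_apply, Complex.ofReal_one, one_mul]
    rfl
  have h₁ := Omega_concat_eq_mul_primitiveFromZero h₀ F₃_ofReal
  have h₂ := Omega_concat_eq_mul_primitiveFromZero h₁ F₁_ofReal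
  have h₃ := Omega_concat_eq_mul_primitiveFromZero h₂ F₂_ofReal
  have h₄ := Omega_concat_eq_mul_primitiveFromZero h₃ F₃_ofReal 1
  rw [outerIntegral_apply, remainder_zero]
  rw [one_mul w₃] at h₄
  refine h₄.trans ?_
  linear_combination (-16 * Complex.I * (primitiveFromZero (primitiveFromZero
    (primitiveFromZero (primitiveFromZero w₃ * w₁) * w₂) * w₃) 1 : ℝ)) * Complex.I_sq

/- STATEMENT 16: `Ω_{3,1,2,3} = -(iπ³/4) log 2 + (13/8) iπ ζ(3)`. -/
theorem stmt_16 :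
    Omega [F₃, F₁, F₂, F₃] 1 =
      -(Complex.I * (Real.pi : ℂ) ^ 3 / 4) * ((Real.log 2 : ℝ) : ℂ) +
        (13 / 8 : ℂ) * Complex.I * (Real.pi : ℂ) * riemannZeta 3 := by
  have hzeta : ((riemannZeta 3).re : ℂ) = riemannZeta 3 :=
    ofReal_re_riemannZeta (k := 3) (by norm_num)
  rw [Omega_F₃_F₁_F₂_F₃_one, outerIntegral_remainder_zero]
  push_cast
  rw [hzeta]
  ring
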